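/- arXiv:1501.05196 — 3 statements merged into one kernel-verified Lean document; each statement's English description precedes it below -/
import Mathlib

section
/- Let ℓ² be the space of real square-summable sequences with canonical basis (e_k), let y_k = (1/k)e_k, and let S = ∑_{k=1}^∞ y_k ∈ ℓ². Define F : [0,1] → L(ℝ,ℓ²) by F(t)x = x·∑_{k=1}^{n} y_k for t ∈ (1/(n+1), 1/n] (n ∈ ℕ, n ≥ 1) and F(0)x = x·S. Then F is of bounded semivariation with SV_0^1(F) = √(π²/6 − 1), SV_0^{1/2}(F) = √(π²/6 − 5/4), SV_{1/2}^1(F) = 1/2, so SV_0^1(F) < SV_0^{1/2}(F) + SV_{1/2}^1(F) (semivariation is not additive with respect to intervals); moreover, var_0^1(F) = ∞. -/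
open Filter Topology

/-- A division `a = α 0 < α 1 < … < α n = b` of the interval `[a,b]`. -/
def IsDivision (a b : ℝ) (n : ℕ) (α : ℕ → ℝ) : Prop :=
  α 0 = a ∧ α n = b ∧ ∀ i < n, α i < α (i + 1)

/-- The semivariation `SV_a^b(F)` of `F : [a,b] → L(X,Y)`. -/
noncomputable def semivar {X Y : Type*} [NormedAddCommGroup X] [NormedSpace ℝ X]
    [NormedAddCommGroup Y] [NormedSpace ℝ Y]
    (a b : ℝ) (F : ℝ → X →L[ℝ] Y) : ENNReal :=
  ⨆ (n : ℕ) (α : ℕ → ℝ) (_ : IsDivision a b n α)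
    (x : ℕ → X) (_ : ∀ j, ‖x j‖ ≤ 1),
    ENNReal.ofReal ‖∑ j ∈ Finset.range n, (F (α (j + 1)) - F (α j)) (x j)‖

/-- The (Jordan) variation `var_a^b(G)` of a function with values in a normed space. -/
noncomputable def evar {E : Type*} [NormedAddCommGroup E] (a b : ℝ) (G : ℝ → E) : ENNReal :=
  ⨆ (n : ℕ) (α : ℕ → ℝ) (_ : IsDivision a b n α),
    ENNReal.ofReal (∑ j ∈ Finset.range n, ‖G (α (j + 1)) - G (α j)‖)

/-- The space `ℓ²` of square-summable real sequences. -/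
noncomputable abbrev ellTwo : Type := lp (fun _ : ℕ => ℝ) 2

/-- `y k = (1/k) • e k`, where `e k` is the canonical basis of `ℓ²` (so `y 0 = 0`). -/
noncomputable def ySeq (k : ℕ) : ellTwo := ((k : ℝ)⁻¹) • lp.single 2 k (1 : ℝ)

/-- `S = ∑_{k=1}^∞ y k`. -/
noncomputable def Ssum : ellTwo := ∑' k, ySeq k

noncomputable def phiAux (k : ℕ) (t : ℝ) : ℝ := if t * k ≤ 1 then (k : ℝ)⁻¹ else 0

lemma phiAux_antitone (k : ℕ) : Antitone (phiAux k) := by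
  intro s t hst
  unfold phiAux
  have hk : (0 : ℝ) ≤ k := Nat.cast_nonneg k
  have h := mul_le_mul_of_nonneg_right hst hk
  split_ifs with h1 h2
  · exact le_rfl
  · exact absurd (h.trans h1) h2
  · positivity
  · exact le_rfl

lemma ySeq_apply (k i : ℕ) : (ySeq k : ℕ → ℝ) i = if i = k then (k : ℝ)⁻¹ else 0 := by
  unfold ySeq
  simp [lp.coeFn_smul, Pi.single_apply]

lemma Ssum_apply (k : ℕ) : (Ssum : ℕ → ℝ) k = (k : ℝ)⁻¹ := by
  have hm : Memℓp (fun k : ℕ => (k : ℝ)⁻¹) 2 := by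
    refine memℓp_gen ?_
    have := hasSum_zeta_two.summable
    simpa using this
  have h := lp.hasSum_single (p := 2) (by norm_num) (⟨_, hm⟩ : ellTwo)
  have h2 : Ssum = ⟨_, hm⟩ := by
    unfold Ssum
    rw [← h.tsum_eq]
    congr 1
    ext k i
    rw [ySeq_apply]
    simp [Pi.single_apply]
  rw [h2]

lemma sumY_apply (n i : ℕ) : ((∑ k ∈ Finset.Icc 1 n, ySeq k : ellTwo) : ℕ → ℝ) i
    = if i ≤ n then (i : ℝ)⁻¹ else 0 := by
  rw [lp.coeFn_sum, Finset.sum_apply]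
  simp only [ySeq_apply, Finset.sum_ite_eq, Finset.mem_Icc]
  rcases Nat.eq_zero_or_pos i with rfl | hi
  · simp
  · have : 1 ≤ i := hi
    simp [this]

lemma F_apply (F : ℝ → ℝ →L[ℝ] ellTwo)
    (hF0 : ∀ x : ℝ, F 0 x = x • Ssum)
    (hFn : ∀ n : ℕ, 1 ≤ n → ∀ t ∈ Set.Ioc ((n + 1 : ℝ))⁻¹ ((n : ℝ))⁻¹, ∀ x : ℝ,
      F t x = x • ∑ k ∈ Finset.Icc 1 n, ySeq k)
    (t : ℝ) (ht0 : 0 ≤ t) (ht1 : t ≤ 1) (x : ℝ) (k : ℕ) :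
    (F t x : ℕ → ℝ) k = x * phiAux k t := by
  rcases ht0.eq_or_lt with rfl | ht
  · rw [hF0, lp.coeFn_smul, Pi.smul_apply, Ssum_apply]
    simp [phiAux]
  · have h1 : (1 : ℝ) ≤ t⁻¹ := (one_le_inv₀ ht).2 ht1
    have hn1 : 1 ≤ ⌊t⁻¹⌋₊ := Nat.le_floor (by simpa using h1)
    have hnpos : (0 : ℝ) < (⌊t⁻¹⌋₊ : ℝ) := by exact_mod_cast hn1
    have hle : (⌊t⁻¹⌋₊ : ℝ) ≤ t⁻¹ := Nat.floor_le (by positivity)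
    have hlt : t⁻¹ < (⌊t⁻¹⌋₊ : ℝ) + 1 := Nat.lt_floor_add_one _
    rw [hFn ⌊t⁻¹⌋₊ hn1 t ⟨inv_lt_of_inv_lt₀ ht hlt, (le_inv_comm₀ hnpos ht).1 hle⟩, lp.coeFn_smul,
      Pi.smul_apply, sumY_apply, smul_eq_mul, phiAux]
    congr 1
    have : k ≤ ⌊t⁻¹⌋₊ ↔ t * k ≤ 1 := by
      rw [Nat.le_floor_iff (by positivity), ← one_div, le_div_iff₀ ht, mul_comm]
    simp [this]

lemma div_mono {a b : ℝ} {n : ℕ} {α : ℕ → ℝ} (h : IsDivision a b n α) {i j : ℕ} (hij : i ≤ j)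
    (hj : j ≤ n) : α i ≤ α j := by
  induction j, hij using Nat.le_induction with
  | base => exact le_rfl
  | succ m hm ih => exact (ih (by omega)).trans (h.2.2 m (by omega)).le

lemma semivar_eq (F : ℝ → ℝ →L[ℝ] ellTwo)
    (hF : ∀ t : ℝ, 0 ≤ t → t ≤ 1 → ∀ (x : ℝ) (k : ℕ), (F t x : ℕ → ℝ) k = x * phiAux k t)
    (a b : ℝ) (ha : 0 ≤ a) (hab : a < b) (hb : b ≤ 1) :
    semivar a b F = ENNReal.ofReal ‖F b 1 - F a 1‖ := by
  apply le_antisymm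
  · unfold semivar
    refine iSup_le fun n => iSup_le fun α => iSup_le fun hα => iSup_le fun x => iSup_le fun hx => ?_
    apply ENNReal.ofReal_le_ofReal
    apply lp.norm_mono (by norm_num)
    intro k
    have hm : ∀ j ≤ n, 0 ≤ α j ∧ α j ≤ 1 := by
      intro j hj
      have h1 := div_mono hα (Nat.zero_le j) hj
      have h2 := div_mono hα hj le_rfl
      rw [hα.1] at h1
      rw [hα.2.1] at h2
      exact ⟨ha.trans h1, h2.trans hb⟩
    rw [lp.coeFn_sum, Finset.sum_apply, lp.coeFn_sub, Pi.sub_apply, hF b (by linarith) hb,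
      hF a ha (by linarith)]
    calc _ ≤ ∑ j ∈ Finset.range n, (phiAux k (α j) - phiAux k (α (j + 1))) := by
          refine (norm_sum_le _ _).trans (Finset.sum_le_sum fun j hj => ?_)
          have hj := Finset.mem_range.1 hj
          have h1 := hm j (by omega)
          have h2 := hm (j + 1) (by omega)
          rw [sub_apply, lp.coeFn_sub, Pi.sub_apply, hF _ h1.1 h1.2,
            hF _ h2.1 h2.2, ← mul_sub, norm_mul]
          have h3 := phiAux_antitone k (hα.2.2 j hj).le
          rw [Real.norm_of_nonpos (sub_nonpos.2 h3)]
          have := mul_le_mul_of_nonneg_right (hx j) (sub_nonneg.2 h3)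
          linarith
      _ = phiAux k a - phiAux k b := by
          rw [Finset.sum_range_sub', hα.1, hα.2.1]
      _ ≤ _ := by
          rw [one_mul, one_mul, norm_sub_rev]
          exact le_abs_self _
  · unfold semivar
    refine le_iSup_of_le 1 (le_iSup_of_le (fun j => if j = 0 then a else b) (le_iSup_of_le ?_
      (le_iSup_of_le (fun _ => 1) (le_iSup_of_le (by simp) ?_))))
    · refine ⟨by simp, by simp, ?_⟩
      intro i hi
      obtain rfl : i = 0 := by omega
      simpa using hab
    · simp

lemma norm_of_hasSum (w : ellTwo) (s : ℝ) (h : HasSum (fun k => (w k) ^ 2) s) :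
    ‖w‖ = Real.sqrt s := by
  have h1 := lp.hasSum_norm (by norm_num) w
  have h2 : ‖w‖ ^ 2 = s := by
    refine HasSum.unique ?_ h
    simpa using h1
  rw [← h2, Real.sqrt_sq (norm_nonneg _)]

lemma evar_top (F : ℝ → ℝ →L[ℝ] ellTwo)
    (hF : ∀ t : ℝ, 0 ≤ t → t ≤ 1 → ∀ (x : ℝ) (k : ℕ), (F t x : ℕ → ℝ) k = x * phiAux k t) :
    evar 0 1 F = ⊤ := by
  have key : ∀ N : ℕ, ENNReal.ofReal (∑ i ∈ Finset.range N, ((i : ℝ) + 2)⁻¹) ≤ evar 0 1 F := by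
    intro N
    unfold evar
    refine le_iSup_of_le (N + 1) (le_iSup_of_le
      (fun j => if j = 0 then 0 else ((N + 2 - j : ℕ) : ℝ)⁻¹) (le_iSup_of_le ?_ ?_))
    · refine ⟨by simp, by simp, ?_⟩
      intro i hi
      rcases Nat.eq_zero_or_pos i with rfl | hi0
      · simp only [if_true, zero_add, one_ne_zero, if_false]
        have : 0 < N + 2 - 1 := by omega
        positivity
      · beta_reduce
        rw [if_neg (by omega), if_neg (by omega)]
        have h1 : 0 < N + 2 - (i + 1) := by omega
        have h2 : N + 2 - (i + 1) < N + 2 - i := by omega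
        exact inv_strictAnti₀ (by exact_mod_cast h1) (by exact_mod_cast h2)
    · apply ENNReal.ofReal_le_ofReal
      rw [Finset.sum_range_succ', ← Finset.sum_range_reflect]
      refine le_add_of_le_of_nonneg (Finset.sum_le_sum fun j hj => ?_) (norm_nonneg _)
      have hj := Finset.mem_range.1 hj
      beta_reduce
      rw [if_neg (by omega), if_neg (by omega)]
      obtain ⟨m, rfl⟩ : ∃ m, N = j + 1 + m := ⟨N - (j + 1), by omega⟩
      have e1 : j + 1 + m + 2 - (j + 1 + 1) = m + 1 := by omega
      have e2 : j + 1 + m + 2 - (j + 1) = m + 2 := by omega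
      have e3 : j + 1 + m - 1 - j = m := by omega
      rw [e1, e2, e3]
      have hm : (0 : ℝ) ≤ m := Nat.cast_nonneg m
      have hc := lp.norm_apply_le_norm (p := 2) (by norm_num)
        ((F (((m + 1 : ℕ) : ℝ)⁻¹) - F (((m + 2 : ℕ) : ℝ)⁻¹)) 1) (m + 2)
      have ho := (F (((m + 1 : ℕ) : ℝ)⁻¹) - F (((m + 2 : ℕ) : ℝ)⁻¹)).le_opNorm 1
      rw [norm_one, mul_one] at ho
      refine le_trans ?_ (hc.trans ho)
      rw [sub_apply, lp.coeFn_sub, Pi.sub_apply,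
        hF _ (by positivity) (inv_le_one_of_one_le₀ (by push_cast; linarith)),
        hF _ (by positivity) (inv_le_one_of_one_le₀ (by push_cast; linarith))]
      have p1 : phiAux (m + 2) (((m + 1 : ℕ) : ℝ)⁻¹) = 0 := by
        unfold phiAux
        rw [if_neg]
        rw [not_le, inv_mul_eq_div, one_lt_div (by positivity)]
        push_cast
        linarith
      have p2 : phiAux (m + 2) (((m + 2 : ℕ) : ℝ)⁻¹) = ((m : ℝ) + 2)⁻¹ := by
        unfold phiAux
        rw [if_pos]
        · push_cast
          rfl
        · rw [inv_mul_cancel₀ (by positivity)]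
      rw [p1, p2, mul_zero, zero_sub, norm_neg, one_mul]
      exact le_abs_self _
  have ht : Tendsto (fun N : ℕ => ∑ i ∈ Finset.range N, ((i : ℝ) + 2)⁻¹) atTop atTop := by
    have h0 := (tendsto_add_atTop_iff_nat 1).2 Real.tendsto_sum_range_one_div_nat_succ_atTop
    have h1 := tendsto_atTop_add_const_right atTop (-1 : ℝ) h0
    refine h1.congr fun N => ?_
    rw [Finset.sum_range_succ']
    simp only [one_div, Nat.cast_add, Nat.cast_one, Nat.cast_zero, zero_add, inv_one, add_neg_cancel_right]
    refine Finset.sum_congr rfl fun i _ => ?_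
    congr 1
    ring
  have ht2 := ENNReal.tendsto_ofReal_atTop.comp ht
  exact top_le_iff.1 (le_of_tendsto' ht2 key)

lemma hasSum_congr_aux {f g : ℕ → ℝ} {s : ℝ} (h : ∀ k, f k = g k) (hg : HasSum g s) :
    HasSum f s := by
  rwa [funext h]

/-- the function `F : [0,1] → L(ℝ,ℓ²)` with `F(t)x = x • ∑_{k=1}^n y k` for
`t ∈ (1/(n+1), 1/n]` and `F(0)x = x • S` satisfies `SV_0^1(F) = √(π²/6 − 1)`,
`SV_0^{1/2}(F) = √(π²/6 − 5/4)`, `SV_{1/2}^1(F) = 1/2`, hence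
`SV_0^1(F) < SV_0^{1/2}(F) + SV_{1/2}^1(F)`; moreover `var_0^1(F) = ∞`. -/
theorem semivar_ellTwo_example
    (F : ℝ → ℝ →L[ℝ] ellTwo)
    (hF0 : ∀ x : ℝ, F 0 x = x • Ssum)
    (hFn : ∀ n : ℕ, 1 ≤ n → ∀ t ∈ Set.Ioc ((n + 1 : ℝ))⁻¹ ((n : ℝ))⁻¹, ∀ x : ℝ,
      F t x = x • ∑ k ∈ Finset.Icc 1 n, ySeq k) :
    semivar 0 1 F = ENNReal.ofReal (Real.sqrt (Real.pi ^ 2 / 6 - 1)) ∧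
    semivar 0 (1 / 2) F = ENNReal.ofReal (Real.sqrt (Real.pi ^ 2 / 6 - 5 / 4)) ∧
    semivar (1 / 2) 1 F = ENNReal.ofReal (1 / 2) ∧
    semivar 0 1 F < semivar 0 (1 / 2) F + semivar (1 / 2) 1 F ∧
    evar 0 1 F = ⊤ := by
  have hF := F_apply F hF0 hFn
  have hz : HasSum (fun k : ℕ => ((k : ℝ)⁻¹) ^ 2) (Real.pi ^ 2 / 6) := by
    simpa using hasSum_zeta_two
  have cast3 : ∀ k : ℕ, k ≠ 0 → k ≠ 1 → k ≠ 2 → (3 : ℝ) ≤ k := by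
    intro k h0 h1 h2
    have : 3 ≤ k := by omega
    exact_mod_cast this
  have A : semivar 0 1 F = ENNReal.ofReal (Real.sqrt (Real.pi ^ 2 / 6 - 1)) := by
    rw [semivar_eq F hF 0 1 le_rfl one_pos le_rfl]
    congr 1
    apply norm_of_hasSum
    refine hasSum_congr_aux (fun k => ?_) (hz.sub (hasSum_ite_eq 1 (1 : ℝ)))
    rw [lp.coeFn_sub, Pi.sub_apply, hF _ zero_le_one le_rfl, hF _ le_rfl zero_le_one]
    by_cases h0 : k = 0
    · subst h0; simp [phiAux]
    by_cases h1 : k = 1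
    · subst h1; simp [phiAux]
    by_cases h2 : k = 2
    · subst h2; norm_num [phiAux]
    have := cast3 k h0 h1 h2
    have h3 : ¬ ((k : ℝ) ≤ 1) := by linarith
    simp [phiAux, h1, h3]
  have B : semivar 0 (1 / 2) F = ENNReal.ofReal (Real.sqrt (Real.pi ^ 2 / 6 - 5 / 4)) := by
    rw [semivar_eq F hF 0 (1 / 2) le_rfl (by norm_num) (by norm_num)]
    congr 1
    apply norm_of_hasSum
    have e : Real.pi ^ 2 / 6 - 5 / 4 = Real.pi ^ 2 / 6 - 1 - 1 / 4 := by ring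
    rw [e]
    refine hasSum_congr_aux (fun k => ?_) ((hz.sub (hasSum_ite_eq 1 (1 : ℝ))).sub (hasSum_ite_eq 2 (1 / 4 : ℝ)))
    rw [lp.coeFn_sub, Pi.sub_apply, hF _ (by norm_num) (by norm_num), hF _ le_rfl zero_le_one]
    by_cases h0 : k = 0
    · subst h0; simp [phiAux]
    by_cases h1 : k = 1
    · subst h1; norm_num [phiAux]
    by_cases h2 : k = 2
    · subst h2; norm_num [phiAux]
    have := cast3 k h0 h1 h2
    have h3 : ¬ (2⁻¹ * (k : ℝ) ≤ 1) := by linarith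
    simp [phiAux, h1, h2, h3]
  have C : semivar (1 / 2) 1 F = ENNReal.ofReal (1 / 2) := by
    rw [semivar_eq F hF (1 / 2) 1 (by norm_num) (by norm_num) le_rfl]
    congr 1
    have e : (1 / 2 : ℝ) = Real.sqrt (1 / 4) := by
      rw [show (1 / 4 : ℝ) = (1 / 2) ^ 2 by norm_num, Real.sqrt_sq (by norm_num)]
    conv_rhs => rw [e]
    apply norm_of_hasSum
    refine hasSum_congr_aux (fun k => ?_) (hasSum_ite_eq 2 (1 / 4 : ℝ))
    rw [lp.coeFn_sub, Pi.sub_apply, hF _ (by norm_num) (by norm_num),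
      hF _ (by norm_num) (by norm_num)]
    by_cases h0 : k = 0
    · subst h0; simp [phiAux]
    by_cases h1 : k = 1
    · subst h1; norm_num [phiAux]
    by_cases h2 : k = 2
    · subst h2; norm_num [phiAux]
    have := cast3 k h0 h1 h2
    have h3 : ¬ (2⁻¹ * (k : ℝ) ≤ 1) := by linarith
    have h4 : ¬ ((k : ℝ) ≤ 1) := by linarith
    simp [phiAux, h2, h3, h4]
  refine ⟨A, B, C, ?_, evar_top F hF⟩
  rw [A, B, C, ← ENNReal.ofReal_add (Real.sqrt_nonneg _) (by norm_num)]
  have hpi : 0 < Real.pi ^ 2 / 6 - 5 / 4 := by nlinarith [Real.pi_gt_three]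
  have hs := Real.sqrt_pos.2 hpi
  have hsq := Real.sq_sqrt hpi.le
  rw [ENNReal.ofReal_lt_ofReal_iff (by positivity)]
  rw [Real.sqrt_lt' (by positivity)]
  nlinarith
end

section
/- Let X be a nonzero real Banach space and Y an infinite-dimensional real Banach space. Then there exists a function F : [a,b] → L(X,Y) of bounded semivariation on [a,b] whose variation is infinite, i.e., SV_a^b(F) < ∞ and var_a^b(F) = ∞. -/
open Filter Topology

abbrev EV (n : ℕ) := EuclideanSpace ℝ (Fin n)

lemma exists_inj {Y : Type*} [NormedAddCommGroup Y] [NormedSpace ℝ Y]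
    (hY : ¬ FiniteDimensional ℝ Y) (n : ℕ) :
    ∃ f : EV n →L[ℝ] Y, Function.Injective f := by
  let b := Module.Basis.ofVectorSpace ℝ Y
  have hinf : Infinite (Module.Basis.ofVectorSpaceIndex ℝ Y) := by
    by_contra h
    rw [not_infinite_iff_finite] at h
    exact hY (Module.Finite.of_basis b)
  let e := Infinite.natEmbedding (Module.Basis.ofVectorSpaceIndex ℝ Y)
  let v : Fin n → Y := fun i => b (e i)
  have hv : LinearIndependent ℝ v :=
    b.linearIndependent.comp (fun i : Fin n => e i)
      (fun i j h => Fin.ext (e.injective h))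
  let g : EV n →ₗ[ℝ] Y :=
    (Fintype.linearCombination ℝ v).comp (WithLp.linearEquiv 2 ℝ (Fin n → ℝ)).toLinearMap
  refine ⟨g.toContinuousLinearMap, ?_⟩
  have h1 : Function.Injective (Fintype.linearCombination ℝ v) :=
    by
    rw [linearIndependent_iff_injective_fintypeLinearCombination] at hv; exact hv
  exact h1.comp (WithLp.linearEquiv 2 ℝ (Fin n → ℝ)).injective

/-- Maximal determinant (John / Lewis position). -/
lemma exists_max {Y : Type*} [NormedAddCommGroup Y] [NormedSpace ℝ Y]
    (hY : ¬ FiniteDimensional ℝ Y) (n : ℕ) :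
    ∃ u : EV n →L[ℝ] Y, ‖u‖ ≤ 1 ∧ ∀ B : EV n →L[ℝ] EV n, ‖u.comp B‖ ≤ 1 → |B.det| ≤ 1 := by
  obtain ⟨f, hf⟩ := exists_inj hY n
  obtain ⟨c, hc, hanti⟩ := (LinearMap.injective_iff_antilipschitz (f : EV n →ₗ[ℝ] Y)).mp hf
  have hb : ∀ x, ‖x‖ ≤ c * ‖f x‖ := by
    intro x
    have := hanti.le_mul_dist x 0
    simpa using this
  let K : Set (EV n →L[ℝ] EV n) := {A | ‖f.comp A‖ ≤ 1}
  have hKc : IsClosed K := by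
    apply isClosed_le _ continuous_const
    exact ((ContinuousLinearMap.compL ℝ (EV n) (EV n) Y f).continuous).norm
  have hKb : Bornology.IsBounded K := by
    rw [isBounded_iff_forall_norm_le]
    refine ⟨c, fun A hA => ContinuousLinearMap.opNorm_le_bound _ c.2 fun x => ?_⟩
    refine (hb _).trans ?_
    refine mul_le_mul_of_nonneg_left ?_ c.2
    exact (f.comp A).le_of_opNorm_le hA x |>.trans (by simp)
  have : ProperSpace (EV n →L[ℝ] EV n) := FiniteDimensional.proper ℝ _
  have hK : IsCompact K := Metric.isCompact_of_isClosed_isBounded hKc hKb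
  obtain ⟨A, hA, hmax⟩ := hK.exists_isMaxOn (f := fun A => |A.det|) ⟨0, by simp [K]⟩
    (ContinuousLinearMap.continuous_det.abs.continuousOn)
  have hpos : 0 < |A.det| := by
    let δ : ℝ := (‖f‖ + 1)⁻¹
    have hδ : 0 < δ := by positivity
    have h1 : δ • ContinuousLinearMap.id ℝ (EV n) ∈ K := by
      show ‖f.comp (δ • ContinuousLinearMap.id ℝ (EV n))‖ ≤ 1
      rw [ContinuousLinearMap.comp_smul, norm_smul, ContinuousLinearMap.comp_id, Real.norm_eq_abs,
        abs_of_pos hδ]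
      have : δ * (‖f‖ + 1) = 1 := inv_mul_cancel₀ (by positivity)
      nlinarith
    refine lt_of_lt_of_le ?_ (hmax h1)
    rw [abs_pos]
    have : (δ • ContinuousLinearMap.id ℝ (EV n)).det = δ ^ n := by
      simp [ContinuousLinearMap.det]
    show (δ • ContinuousLinearMap.id ℝ (EV n)).det ≠ 0
    rw [this]
    positivity
  refine ⟨f.comp A, hA, fun B hB => ?_⟩
  have h2 : |(A.comp B).det| ≤ |A.det| := hmax (show ‖f.comp (A.comp B)‖ ≤ 1 from hB)
  have h3 : (A.comp B).det = A.det * B.det := by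
    simp [ContinuousLinearMap.det, ContinuousLinearMap.coe_comp, LinearMap.det_comp]
  rw [h3, abs_mul] at h2
  exact (mul_le_iff_le_one_right hpos).mp h2

lemma norm_sum_sq {n : ℕ} (b : OrthonormalBasis (Fin n) ℝ (EV n)) (c : Fin n → ℝ)
    (T : Finset (Fin n)) : ‖∑ i ∈ T, c i • b i‖ ^ 2 = ∑ i ∈ T, c i ^ 2 := by
  rw [← real_inner_self_eq_norm_sq, b.orthonormal.inner_sum]
  simp [sq]

lemma step {Y : Type*} [NormedAddCommGroup Y] [NormedSpace ℝ Y] (m : ℕ)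
    (u : EV (2 * m) →L[ℝ] Y) (hu : ‖u‖ ≤ 1)
    (hmax : ∀ B : EV (2 * m) →L[ℝ] EV (2 * m), ‖u.comp B‖ ≤ 1 → |B.det| ≤ 1)
    (k : ℕ) (hk : k < m) (b : OrthonormalBasis (Fin (2 * m)) ℝ (EV (2 * m))) :
    ∃ y : EV (2 * m), ‖y‖ = 1 ∧ (∀ i, i.val < k → inner ℝ (b i) y = 0) ∧ 1 / 4 ≤ ‖u y‖ := by
  by_contra hcon
  push Not at hcon
  let T : Finset (Fin (2 * m)) := Finset.univ.filter (fun i => k ≤ i.val)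
  let P : EV (2 * m) →L[ℝ] EV (2 * m) := ∑ i ∈ T, (innerSL ℝ (b i)).smulRight (b i)
  have hP : ∀ x, P x = ∑ i ∈ T, (inner ℝ (b i) x : ℝ) • b i := by
    intro x
    simp [P]
  have hPn : ∀ x, ‖P x‖ ≤ ‖x‖ := by
    intro x
    rw [hP]
    refine abs_le_of_sq_le_sq' ?_ (norm_nonneg _) |>.2
    rw [norm_sum_sq]
    have := b.orthonormal.sum_inner_products_le x (s := T)
    simpa using this
  have hPu : ∀ x, ‖u (P x)‖ ≤ 1 / 4 * ‖x‖ := by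
    intro x
    by_cases h0 : P x = 0
    · rw [h0]; simp
    have hn : 0 < ‖P x‖ := norm_pos_iff.mpr h0
    have h1 := hcon (‖P x‖⁻¹ • P x) (by rw [norm_smul, norm_inv, norm_norm]; field_simp) (by
      intro i hi
      rw [inner_smul_right, hP, inner_sum]
      refine mul_eq_zero_of_right _ (Finset.sum_eq_zero ?_)
      intro j hj
      have : i ≠ j := by
        rintro rfl
        simp [T] at hj
        omega
      rw [inner_smul_right, b.orthonormal.inner_eq_zero this, mul_zero])
    rw [map_smul, norm_smul, norm_inv, norm_norm, inv_mul_lt_iff₀ hn] at h1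
    have := hPn x
    linarith
  let B : EV (2 * m) →L[ℝ] EV (2 * m) := (4 / 5 : ℝ) • (ContinuousLinearMap.id ℝ _ + P)
  have hB : ‖u.comp B‖ ≤ 1 := by
    refine ContinuousLinearMap.opNorm_le_bound _ zero_le_one fun x => ?_
    have : u.comp B x = (4 / 5 : ℝ) • (u x + u (P x)) := by simp [B]
    rw [this, norm_smul]
    have h1 := norm_add_le (u x) (u (P x))
    have h2 := hPu x
    have h3 : ‖u x‖ ≤ 1 * ‖x‖ := u.le_of_opNorm_le hu x
    rw [Real.norm_eq_abs, abs_of_pos (by norm_num)]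
    linarith
  have hdet : B.det = (4 / 5 : ℝ) ^ (2 * m) * 2 ^ T.card := by
    have h1 : ((ContinuousLinearMap.id ℝ (EV (2 * m)) + P : EV (2 * m) →L[ℝ] EV (2 * m)) :
        EV (2 * m) →ₗ[ℝ] EV (2 * m)) = Matrix.toLin b.toBasis b.toBasis
        (Matrix.diagonal (fun i => if i ∈ T then (2 : ℝ) else 1)) := by
      refine b.toBasis.ext fun i => ?_
      rw [Matrix.toLin_self]
      simp only [ContinuousLinearMap.coe_coe, ContinuousLinearMap.add_apply, OrthonormalBasis.coe_toBasis]
      rw [hP]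
      simp only [orthonormal_iff_ite.mp b.orthonormal, Matrix.diagonal_apply, ite_smul, zero_smul,
        one_smul, Finset.sum_ite_eq', Finset.mem_univ, if_true, ContinuousLinearMap.id_apply]
      split_ifs
      · rw [two_smul]
      · simp
    have h2 : LinearMap.det ((ContinuousLinearMap.id ℝ (EV (2 * m)) + P :
        EV (2 * m) →L[ℝ] EV (2 * m)) : EV (2 * m) →ₗ[ℝ] EV (2 * m)) = 2 ^ T.card := by
      rw [h1, LinearMap.det_toLin, Matrix.det_diagonal, Finset.prod_ite]
      simp
    have h3 : B.det = LinearMap.det ((4 / 5 : ℝ) • ((ContinuousLinearMap.id ℝ (EV (2 * m)) + P :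
        EV (2 * m) →L[ℝ] EV (2 * m)) : EV (2 * m) →ₗ[ℝ] EV (2 * m))) := rfl
    rw [h3, LinearMap.det_smul, h2]
    simp
  have hT : m ≤ T.card := by
    let f : Fin m → Fin (2 * m) := fun i => ⟨m + i, by omega⟩
    have hf : Function.Injective f := fun i j h => by
      simp only [f, Fin.mk.injEq] at h
      exact Fin.ext (by omega)
    have := Finset.card_le_card (s := Finset.univ.image f) (t := T) (by
      intro i hi
      simp only [Finset.mem_image, Finset.mem_univ, true_and] at hi
      obtain ⟨j, rfl⟩ := hi
      simp only [T, f, Finset.mem_filter, Finset.mem_univ, true_and]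
      omega)
    rw [Finset.card_image_of_injective _ hf] at this
    simpa using this
  have h := hmax B hB
  rw [hdet, abs_of_pos (by positivity)] at h
  have h4 : (1 : ℝ) < (4 / 5 : ℝ) ^ (2 * m) * 2 ^ m := by
    rw [pow_mul, ← mul_pow]
    exact one_lt_pow₀ (by norm_num) (by omega)
  have h5 : (2 : ℝ) ^ m ≤ 2 ^ T.card := pow_le_pow_right₀ (by norm_num) hT
  have h6 : (0 : ℝ) < (4 / 5 : ℝ) ^ (2 * m) := by positivity
  nlinarith

lemma exists_basis {Y : Type*} [NormedAddCommGroup Y] [NormedSpace ℝ Y] (m : ℕ)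
    (u : EV (2 * m) →L[ℝ] Y) (hu : ‖u‖ ≤ 1)
    (hmax : ∀ B : EV (2 * m) →L[ℝ] EV (2 * m), ‖u.comp B‖ ≤ 1 → |B.det| ≤ 1)
    (k : ℕ) (hk : k ≤ m) :
    ∃ b : OrthonormalBasis (Fin (2 * m)) ℝ (EV (2 * m)), ∀ i, i.val < k → 1 / 4 ≤ ‖u (b i)‖ := by
  induction k with
  | zero => exact ⟨EuclideanSpace.basisFun _ ℝ, by simp⟩
  | succ k ih =>
    obtain ⟨b, hb⟩ := ih (by omega)
    obtain ⟨y, hy1, hy2, hy3⟩ := step m u hu hmax k (by omega) b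
    let v : Fin (2 * m) → EV (2 * m) := fun i => if i.val < k then b i else y
    let s : Set (Fin (2 * m)) := {i | i.val < k + 1}
    have hv : Orthonormal ℝ (s.domRestrict v) := by
      constructor
      · rintro ⟨i, hi⟩
        simp only [Set.domRestrict_apply, v]
        split_ifs
        · exact b.orthonormal.1 i
        · exact hy1
      · rintro ⟨i, hi⟩ ⟨j, hj⟩ hij
        have hij' : i ≠ j := fun h => hij (Subtype.ext h)
        have hij'' : i.val ≠ j.val := fun h => hij' (Fin.ext h)
        simp only [s, Set.mem_setOf_eq] at hi hj
        simp only [Set.domRestrict_apply, v]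
        split_ifs with h1 h2 h2
        · exact b.orthonormal.2 hij'
        · exact hy2 i h1
        · rw [real_inner_comm]; exact hy2 j h2
        · omega
    obtain ⟨b', hb'⟩ := hv.exists_orthonormalBasis_extension_of_card_eq (by simp)
    refine ⟨b', fun i hi => ?_⟩
    rw [hb' i hi]
    simp only [v]
    split_ifs with h
    · exact hb i h
    · exact hy3

/-- Every finite combination with coefficients in `[-1,1]` has norm at most `C`. -/
def WBdd {κ Y : Type*} [NormedAddCommGroup Y] [NormedSpace ℝ Y] (C : ℝ) (y : κ → Y) : Prop :=
  ∀ (s : Finset κ) (c : κ → ℝ), (∀ i, |c i| ≤ 1) → ‖∑ i ∈ s, c i • y i‖ ≤ C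

lemma exists_block {Y : Type*} [NormedAddCommGroup Y] [NormedSpace ℝ Y]
    (hY : ¬ FiniteDimensional ℝ Y) (k : ℕ) :
    ∃ y : ℕ → Y, WBdd ((1 / 2 : ℝ) ^ k) y ∧ ∃ N, 1 ≤ ∑ i ∈ Finset.range N, ‖y i‖ := by
  classical
  let q : ℕ := 4 * 2 ^ k
  let m : ℕ := q ^ 2
  have hq : (0 : ℝ) < q := by simp [q]
  obtain ⟨u, hu, hmax⟩ := exists_max hY (2 * m)
  obtain ⟨b, hb⟩ := exists_basis m u hu hmax m le_rfl
  let r : ℝ := 4 / m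
  have hm : (m : ℝ) = (q : ℝ) ^ 2 := by simp [m]
  have hr : 0 < r := by simp only [r, hm]; positivity
  let y : ℕ → Y := fun i => if h : i < m then r • u (b ⟨i, by omega⟩) else 0
  refine ⟨y, ?_, m, ?_⟩
  · intro s c hc
    let T : Finset (Fin (2 * m)) := Finset.univ.filter (fun i => i.val ∈ s ∧ i.val < m)
    have h1 : ∑ i ∈ s, c i • y i = r • u (∑ i ∈ T, c i.val • b i) := by
      have h2 : ∑ i ∈ s, c i • y i = ∑ i ∈ T.map Fin.valEmbedding, c i • y i := by
        symm
        apply Finset.sum_subset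
        · intro i hi
          simp only [Finset.mem_map, T, Finset.mem_filter] at hi
          obtain ⟨j, ⟨_, h, _⟩, rfl⟩ := hi
          exact h
        · intro i hi hi'
          have : ¬ i < m := fun h => hi' (by
            simp only [Finset.mem_map, T, Finset.mem_filter]
            exact ⟨⟨i, by omega⟩, ⟨Finset.mem_univ _, hi, h⟩, rfl⟩)
          simp [y, this]
      rw [h2, Finset.sum_map, map_sum, Finset.smul_sum]
      refine Finset.sum_congr rfl fun i hi => ?_
      simp only [T, Finset.mem_filter] at hi
      simp only [Fin.valEmbedding_apply, y, hi.2.2, dif_pos, map_smul]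
      rw [smul_comm]
    have hT : (T.card : ℝ) ≤ m := by
      have : T.card ≤ (Finset.range m).card := by
        rw [← Finset.card_map Fin.valEmbedding]
        apply Finset.card_le_card
        intro i hi
        simp only [Finset.mem_map, T, Finset.mem_filter] at hi
        obtain ⟨j, ⟨_, _, h⟩, rfl⟩ := hi
        exact Finset.mem_range.mpr h
      rw [Finset.card_range] at this
      exact_mod_cast this
    have h3 : ‖∑ i ∈ T, c i.val • b i‖ ≤ q := by
      refine abs_le_of_sq_le_sq' ?_ hq.le |>.2
      rw [norm_sum_sq b (fun i => c i.val) T, ← hm]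
      refine le_trans ?_ hT
      have : ∀ i ∈ T, c i.val ^ 2 ≤ 1 := fun i _ => by
        rw [sq_le_one_iff_abs_le_one]; exact hc _
      simpa using Finset.sum_le_sum this
    rw [h1, norm_smul, Real.norm_eq_abs, abs_of_pos hr]
    have h4 : ‖u (∑ i ∈ T, c i.val • b i)‖ ≤ q :=
      (u.le_of_opNorm_le hu _).trans (by rw [one_mul]; exact h3)
    calc r * ‖u (∑ i ∈ T, c i.val • b i)‖ ≤ r * q := by gcongr
      _ = (1 / 2 : ℝ) ^ k := by
        simp only [r, hm, q]; push_cast; field_simp; rw [← mul_pow]; norm_num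
  · have h1 : ∀ i ∈ Finset.range m, (1 / m : ℝ) ≤ ‖y i‖ := by
      intro i hi
      have hi' := Finset.mem_range.mp hi
      simp only [y, hi', dif_pos]
      rw [norm_smul, Real.norm_eq_abs, abs_of_pos hr]
      have := hb ⟨i, by omega⟩ hi'
      calc (1 / m : ℝ) = r * (1 / 4) := by simp only [r]; ring
        _ ≤ _ := by gcongr
    have := Finset.sum_le_sum h1
    refine le_trans (le_of_eq ?_) this
    have : (m : ℝ) ≠ 0 := by rw [hm]; positivity
    simp [this]

lemma exists_seq {Y : Type*} [NormedAddCommGroup Y] [NormedSpace ℝ Y]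
    (hY : ¬ FiniteDimensional ℝ Y) :
    ∃ y : ℕ → Y, WBdd 2 y ∧ ∀ M : ℕ, ∃ n, (M : ℝ) ≤ ∑ i ∈ Finset.range n, ‖y i‖ := by
  classical
  choose Z hZ N hN using exists_block hY
  refine ⟨fun n => Z n.unpair.1 n.unpair.2, ?_, ?_⟩
  · intro s c hc
    have h1 : ∑ n ∈ s, c n • Z n.unpair.1 n.unpair.2 =
        ∑ k ∈ Finset.range (s.sup id + 1), ∑ i ∈ Finset.range (s.sup id + 1),
          (if Nat.pair k i ∈ s then c (Nat.pair k i) else 0) • Z k i := by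
      rw [← Finset.sum_product']
      let e : ℕ × ℕ ↪ ℕ := Nat.pairEquiv.toEmbedding
      have h2 : ∑ n ∈ (Finset.range (s.sup id + 1) ×ˢ Finset.range (s.sup id + 1)).map e,
          (if n ∈ s then c n else 0) • Z n.unpair.1 n.unpair.2 =
          ∑ n ∈ s, c n • Z n.unpair.1 n.unpair.2 := by
        have : ∑ n ∈ s, c n • Z n.unpair.1 n.unpair.2 =
          ∑ n ∈ s, (if n ∈ s then c n else 0) • Z n.unpair.1 n.unpair.2 :=
          Finset.sum_congr rfl fun n hn => by rw [if_pos hn]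
        rw [this]
        symm
        apply Finset.sum_subset
        · intro n hn
          have hle : n ≤ s.sup id := Finset.le_sup (f := id) hn
          simp only [Finset.mem_map, Finset.mem_product, Finset.mem_range]
          refine ⟨n.unpair, ⟨?_, ?_⟩, ?_⟩
          · have := Nat.unpair_left_le n; omega
          · have := Nat.unpair_right_le n; omega
          · exact Nat.pair_unpair n
        · intro n _ hn
          simp [hn]
      rw [← h2, Finset.sum_map]
      refine Finset.sum_congr rfl fun p _ => ?_
      have he : e p = Nat.pair p.1 p.2 := rfl
      rw [he, Nat.unpair_pair]
    rw [h1]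
    refine (norm_sum_le _ _).trans ?_
    refine le_trans (Finset.sum_le_sum fun k _ => hZ k _ _ ?_) (sum_geometric_two_le _)
    intro i
    split_ifs
    · exact hc _
    · simp
  · intro M
    let S : Finset ℕ := (Finset.range M).biUnion fun k => (Finset.range (N k)).image (Nat.pair k)
    refine ⟨S.sup id + 1, ?_⟩
    have h1 : S ⊆ Finset.range (S.sup id + 1) := fun n hn => by
      have hle : n ≤ S.sup id := Finset.le_sup (f := id) hn
      exact Finset.mem_range.mpr (Nat.lt_succ_of_le hle)
    refine le_trans ?_ (Finset.sum_le_sum_of_subset_of_nonneg h1 fun _ _ _ => norm_nonneg _)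
    rw [Finset.sum_biUnion]
    · have : ∀ k ∈ Finset.range M, (1 : ℝ) ≤
          ∑ n ∈ (Finset.range (N k)).image (Nat.pair k), ‖Z n.unpair.1 n.unpair.2‖ := by
        intro k _
        rw [Finset.sum_image]
        · simpa using hN k
        · intro i _ j _ h
          exact (Nat.pair_eq_pair.mp h).2
      simpa using Finset.sum_le_sum this
    · intro k _ l _ hkl
      rw [Function.onFun, Finset.disjoint_left]
      intro n h1 h2
      simp only [Finset.mem_image] at h1 h2
      obtain ⟨i, _, rfl⟩ := h1
      obtain ⟨j, _, h⟩ := h2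
      exact hkl (Nat.pair_eq_pair.mp h).1.symm

lemma WBdd.extend {κ l Y : Type*} [NormedAddCommGroup Y] [NormedSpace ℝ Y] {C : ℝ} {y : κ → Y}
    (hy : WBdd C y) (t : κ → l) (ht : Function.Injective t) :
    WBdd C (Function.extend t y 0) := by
  classical
  intro s c hc
  rw [← Finset.sum_preimage t s ht.injOn (fun p => c p • Function.extend t y 0 p)]
  · simp only [ht.extend_apply]
    exact hy _ (fun i => c (t i)) fun i => hc _
  · intro p _ hp
    rw [Function.extend_apply' _ _ _ (by simpa using hp)]
    simp

lemma WBdd.comp_injOn {Y : Type*} [NormedAddCommGroup Y] [NormedSpace ℝ Y] {C : ℝ} {g : ℝ → Y}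
    (hg : WBdd C g) (α : ℕ → ℝ) (n : ℕ) (hα : Set.InjOn α (Finset.range n : Set ℕ))
    (c : ℕ → ℝ) (hc : ∀ i, |c i| ≤ 1) : ‖∑ j ∈ Finset.range n, c j • g (α j)‖ ≤ C := by
  classical
  have h := hg ((Finset.range n).image α)
    (fun p => c (Function.invFunOn α (Finset.range n : Set ℕ) p)) (fun p => hc _)
  rw [Finset.sum_image hα] at h
  convert h using 2
  refine Finset.sum_congr rfl fun j hj => ?_
  rw [hα.leftInvOn_invFunOn hj]

/-- if `X ≠ 0` and `Y` is infinite-dimensional, then there exists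
`F : [a,b] → L(X,Y)` of bounded semivariation whose variation is infinite. -/
theorem exists_semivar_lt_top_evar_eq_top
    {X Y : Type*} [NormedAddCommGroup X] [NormedSpace ℝ X] [CompleteSpace X] [Nontrivial X]
    [NormedAddCommGroup Y] [NormedSpace ℝ Y] [CompleteSpace Y]
    (hY : ¬ FiniteDimensional ℝ Y)
    (a b : ℝ) (hab : a < b) :
    ∃ F : ℝ → X →L[ℝ] Y, semivar a b F < ⊤ ∧ evar a b F = ⊤ := by
  obtain ⟨y, hy, hysum⟩ := exists_seq hY
  obtain ⟨x₀, hx₀⟩ := exists_ne (0 : X)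
  obtain ⟨φ, hφ, -⟩ := exists_dual_vector ℝ x₀ (norm_ne_zero_iff.mpr hx₀)
  let h : ℕ → ℝ := fun j => b - (b - a) / (j + 1)
  have hba : 0 < b - a := sub_pos.mpr hab
  have hmono : StrictMono h := by
    intro i j hij
    simp only [h]
    have : (i : ℝ) < j := by exact_mod_cast hij
    gcongr
  have hlt : ∀ j, h j < b := by
    intro j
    simp only [h]
    have : 0 < (b - a) / (j + 1) := by positivity
    linarith
  let t : ℕ → ℝ := fun i => h (2 * i + 1)
  have ht : Function.Injective t := fun i j hij => by
    have := hmono.injective hij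
    omega
  let g : ℝ → Y := Function.extend t y 0
  have hg : WBdd 2 g := hy.extend t ht
  have hg1 : ∀ i, g (h (2 * i + 1)) = y i := fun i => ht.extend_apply y 0 i
  have hg0 : ∀ i, g (h (2 * i)) = 0 := fun i => by
    refine Function.extend_apply' _ _ _ ?_
    rintro ⟨j, hj⟩
    have := hmono.injective hj
    omega
  refine ⟨fun s => φ.smulRight (g s), ?_, ?_⟩
  · refine lt_of_le_of_lt (b := ENNReal.ofReal 4) ?_ ENNReal.ofReal_lt_top
    refine iSup_le fun n => iSup_le fun α => iSup_le fun hα => iSup_le fun x => iSup_le fun hx => ?_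
    apply ENNReal.ofReal_le_ofReal
    have hlt' : ∀ i j, i < j → j ≤ n → α i < α j := by
      intro i j hij
      induction j, hij using Nat.le_induction with
      | base => intro hj; exact hα.2.2 i (by omega)
      | succ j hj ih => intro hj'; exact (ih (by omega)).trans (hα.2.2 j (by omega))
    have hinj : ∀ i j, i ≤ n → j ≤ n → α i = α j → i = j := by
      intro i j hi hj he
      rcases lt_trichotomy i j with h1 | h1 | h1
      · exact absurd he (hlt' i j h1 hj).ne
      · exact h1
      · exact absurd he (hlt' j i h1 hi).ne'
    have hc : ∀ j, |φ (x j)| ≤ 1 := fun j => by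
      have := φ.le_of_opNorm_le hφ.le (x j)
      have h2 := hx j
      rw [Real.norm_eq_abs] at this
      linarith
    have e : ∑ j ∈ Finset.range n, (φ.smulRight (g (α (j + 1))) - φ.smulRight (g (α j))) (x j)
        = ∑ j ∈ Finset.range n, φ (x j) • g (α (j + 1)) - ∑ j ∈ Finset.range n, φ (x j) • g (α j) := by
      rw [← Finset.sum_sub_distrib]
      simp
    rw [e]
    have h1 := hg.comp_injOn (fun j => α (j + 1)) n (by
      intro i hi j hj hij
      simp only [Finset.coe_range, Set.mem_Iio] at hi hj
      have := hinj _ _ (by omega) (by omega) hij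
      omega) (fun j => φ (x j)) hc
    have h2 := hg.comp_injOn α n (by
      intro i hi j hj hij
      simp only [Finset.coe_range, Set.mem_Iio] at hi hj
      exact hinj _ _ (by omega) (by omega) hij) (fun j => φ (x j)) hc
    refine (norm_sub_le _ _).trans ?_
    linarith
  · rw [eq_top_iff]
    refine le_of_forall_lt fun r hr => ?_
    obtain ⟨M, hM⟩ := ENNReal.exists_nat_gt hr.ne
    refine hM.trans_le ?_
    obtain ⟨n, hn⟩ := hysum M
    let α : ℕ → ℝ := fun j => if j ≤ 2 * n then h j else b
    have hα : IsDivision a b (2 * n + 1) α := by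
      refine ⟨by simp [α, h], by simp [α], ?_⟩
      intro i hi
      simp only [α]
      rw [if_pos (by omega)]
      split_ifs
      · exact hmono (by omega)
      · exact hlt i
    refine le_trans ?_ (le_iSup_of_le (2 * n + 1) (le_iSup_of_le α (le_iSup_of_le hα le_rfl)))
    rw [← ENNReal.ofReal_natCast]
    apply ENNReal.ofReal_le_ofReal
    refine hn.trans ?_
    have hsub : (Finset.range n).image (fun i => 2 * i) ⊆ Finset.range (2 * n + 1) := by
      intro j hj
      simp only [Finset.mem_image, Finset.mem_range] at hj ⊢
      omega
    refine le_trans ?_ (Finset.sum_le_sum_of_subset_of_nonneg hsub fun _ _ _ => norm_nonneg _)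
    rw [Finset.sum_image (fun i _ j _ hij => by simpa using hij)]
    refine Finset.sum_le_sum fun i hi => ?_
    have hi' := Finset.mem_range.mp hi
    have e1 : α (2 * i + 1) = h (2 * i + 1) := if_pos (by omega)
    have e2 : α (2 * i) = h (2 * i) := if_pos (by omega)
    rw [e1, e2]
    beta_reduce
    rw [hg1, hg0]
    have e3 : φ.smulRight (y i) - φ.smulRight (0 : Y) = φ.smulRight (y i) := by
      ext; simp
    rw [e3, ContinuousLinearMap.norm_smulRight_apply, hφ, one_mul]
end

section
/- Let X be a nonzero real Banach space and Y a real Banach space. The following are equivalent: (i) Y is finite-dimensional; (ii) every function F : [a,b] → L(X,Y) of bounded semivariation on [a,b] is of bounded variation on [a,b]. -/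
open Filter Topology

open Module in
lemma exists_max_map {Y : Type*} [NormedAddCommGroup Y] [NormedSpace ℝ Y]
    (hY : ¬ FiniteDimensional ℝ Y) (n : ℕ) :
    ∃ w : EuclideanSpace ℝ (Fin n) →L[ℝ] Y, ‖w‖ ≤ 1 ∧
      ∀ (T : EuclideanSpace ℝ (Fin n) →L[ℝ] EuclideanSpace ℝ (Fin n)) (r : ℝ), 0 < r →
        ‖w ∘L T‖ ≤ r → |T.det| ≤ r ^ n := by
  set H := EuclideanSpace ℝ (Fin n)
  -- an injective map
  have hinj : ∃ j : H →ₗ[ℝ] Y, j.ker = ⊥ := by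
    let B := Basis.ofVectorSpace ℝ Y
    have hinf : Infinite (Basis.ofVectorSpaceIndex ℝ Y) := by
      by_contra hfin
      rw [not_infinite_iff_finite] at hfin
      exact hY (B.finiteDimensional_of_finite)
    let e : Fin n → Basis.ofVectorSpaceIndex ℝ Y := fun i => Infinite.natEmbedding _ i.val
    have he : Function.Injective e := by
      intro i i' h
      exact Fin.ext ((Infinite.natEmbedding _).injective h)
    have hli : LinearIndependent ℝ (B ∘ e) := B.linearIndependent.comp e he
    refine ⟨(EuclideanSpace.basisFun (Fin n) ℝ).toBasis.constr ℝ (B ∘ e), ?_⟩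
    apply LinearMap.ker_eq_bot.2
    exact Basis.injective_constr_of_linearIndependent _ hli
  obtain ⟨j₀, hj₀⟩ := hinj
  obtain ⟨K, hK0, hK⟩ := j₀.exists_antilipschitzWith hj₀
  let j : H →L[ℝ] Y := LinearMap.toContinuousLinearMap j₀
  have hjx : ∀ x, ‖x‖ ≤ K * ‖j x‖ := by
    intro x
    have := hK.le_mul_dist x 0
    simpa [j, dist_eq_norm] using this
  let S : Set (H →L[ℝ] H) := {u | ‖j ∘L u‖ ≤ 1}
  have hScl : IsClosed S := by
    apply isClosed_le _ continuous_const
    fun_prop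
  have hSbd : Bornology.IsBounded S := by
    apply (Metric.isBounded_closedBall (x := (0 : H →L[ℝ] H)) (r := K)).subset
    intro u hu
    rw [mem_closedBall_zero_iff]
    refine u.opNorm_le_bound K.2 (fun x => ?_)
    refine (hjx _).trans ?_
    have h1 : ‖(j ∘L u) x‖ ≤ 1 * ‖x‖ := (j ∘L u).le_of_opNorm_le hu x
    simp only [ContinuousLinearMap.comp_apply, one_mul] at h1
    exact mul_le_mul_of_nonneg_left h1 K.2
  have hSc : IsCompact S := by
    have : ProperSpace (H →L[ℝ] H) := FiniteDimensional.proper ℝ _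
    exact Metric.isCompact_of_isClosed_isBounded hScl hSbd
  have hcont : Continuous (fun u : H →L[ℝ] H => |u.det|) :=
    ContinuousLinearMap.continuous_det.abs
  obtain ⟨u, huS, hmax⟩ := hSc.exists_isMaxOn ⟨0, by simp [S]⟩ hcont.continuousOn
  have hdet : ∀ (c : ℝ) (v : H →L[ℝ] H), (c • v).det = c ^ n * v.det := by
    intro c v
    change LinearMap.det (c • (v : H →ₗ[ℝ] H)) = _
    rw [LinearMap.det_smul]
    simp [H, ContinuousLinearMap.det]
  have hpos : 0 < |u.det| := by
    let c : ℝ := (‖j‖ + 1)⁻¹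
    have hc : 0 < c := by positivity
    have hmem : c • ContinuousLinearMap.id ℝ H ∈ S := by
      change ‖j ∘L (c • ContinuousLinearMap.id ℝ H)‖ ≤ 1
      rw [ContinuousLinearMap.comp_smul, ContinuousLinearMap.comp_id, norm_smul,
        Real.norm_of_nonneg hc.le]
      change (‖j‖ + 1)⁻¹ * ‖j‖ ≤ 1
      rw [inv_mul_le_iff₀ (by positivity)]
      linarith
    have h1 := hmax hmem
    simp only [Set.mem_ofPred_eq] at h1
    refine lt_of_lt_of_le ?_ h1
    rw [hdet]
    have : (ContinuousLinearMap.id ℝ H).det = 1 := by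
      simp [ContinuousLinearMap.det]
    rw [this]
    positivity
  refine ⟨j ∘L u, huS, ?_⟩
  intro T r hr hT
  have hmem : r⁻¹ • (u ∘L T) ∈ S := by
    change ‖j ∘L (r⁻¹ • (u ∘L T))‖ ≤ 1
    rw [ContinuousLinearMap.comp_smul, norm_smul, Real.norm_of_nonneg (by positivity),
      inv_mul_le_iff₀ hr, mul_one]
    exact hT
  have h1 := hmax hmem
  simp only [Set.mem_ofPred_eq] at h1
  rw [hdet] at h1
  have h2 : (u ∘L T).det = u.det * T.det := by
    simp [ContinuousLinearMap.det, LinearMap.det_comp]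
  rw [h2, abs_mul, abs_mul, abs_of_pos (by positivity : 0 < r⁻¹ ^ n), inv_pow,
    inv_mul_le_iff₀ (by positivity)] at h1
  nlinarith

lemma extend_step {Y : Type*} [NormedAddCommGroup Y] [NormedSpace ℝ Y] (m : ℕ)
    (w : EuclideanSpace ℝ (Fin (2 * m)) →L[ℝ] Y) (hw1 : ‖w‖ ≤ 1)
    (hw : ∀ (T : EuclideanSpace ℝ (Fin (2 * m)) →L[ℝ] EuclideanSpace ℝ (Fin (2 * m))) (r : ℝ),
      0 < r → ‖w ∘L T‖ ≤ r → |T.det| ≤ r ^ (2 * m))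
    (k : ℕ) (hk : k < m)
    (b : OrthonormalBasis (Fin (2 * m)) ℝ (EuclideanSpace ℝ (Fin (2 * m)))) :
    ∃ x, ‖x‖ = 1 ∧ (∀ i, i.val < k → inner ℝ (b i) x = 0) ∧ 1 / 4 ≤ ‖w x‖ := by
  by_contra! hcon
  set H := EuclideanSpace ℝ (Fin (2 * m))
  have hcon' : ∀ x, (∀ i, i.val < k → inner ℝ (b i) x = 0) → ‖w x‖ ≤ 1 / 4 * ‖x‖ := by
    intro x hx
    by_cases h0 : x = 0
    · simp [h0]
    have hx0 : 0 < ‖x‖ := norm_pos_iff.2 h0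
    have h1 := hcon (‖x‖⁻¹ • x) (by rw [norm_smul, norm_inv, norm_norm]; field_simp)
      (fun i hi => by rw [inner_smul_right, hx i hi, mul_zero])
    rw [map_smul, norm_smul, norm_inv, norm_norm, inv_mul_lt_iff₀ hx0] at h1
    linarith
  let d : Fin (2 * m) → ℝ := fun i => if i.val < k then 1 else 2
  let T₀ : H →ₗ[ℝ] H := Matrix.toLin b.toBasis b.toBasis (Matrix.diagonal d)
  have hTb : ∀ i, T₀ (b i) = d i • b i := by
    intro i
    have := Matrix.toLin_self b.toBasis b.toBasis (Matrix.diagonal d) i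
    simp only [OrthonormalBasis.coe_toBasis] at this
    rw [this, Finset.sum_eq_single i]
    · simp
    · intro l _ hl
      simp [Matrix.diagonal_apply_ne _ hl]
    · simp
  have hinner : ∀ x i, inner ℝ (b i) (T₀ x) = d i * inner ℝ (b i) x := by
    intro x i
    conv_lhs => rw [← b.sum_repr' x]
    rw [map_sum, inner_sum, Finset.sum_eq_single i]
    · rw [map_smul, hTb, inner_smul_right, inner_smul_right]
      simp
      ring
    · intro l _ hl
      rw [map_smul, hTb, inner_smul_right, inner_smul_right, b.inner_eq_zero hl.symm]
      simp
    · simp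
  let T : H →L[ℝ] H := LinearMap.toContinuousLinearMap T₀
  have hnorm : ‖w ∘L T‖ ≤ 5 / 4 := by
    refine ContinuousLinearMap.opNorm_le_bound _ (by norm_num) (fun x => ?_)
    have hT : (w ∘L T) x = w x + w (T₀ x - x) := by
      rw [← map_add]; simp [T]
    have hz : ∀ i, inner ℝ (b i) (T₀ x - x) = (d i - 1) * inner ℝ (b i) x := by
      intro i
      rw [inner_sub_right, hinner]; ring
    have h1 : ‖w (T₀ x - x)‖ ≤ 1 / 4 * ‖T₀ x - x‖ := by
      apply hcon'
      intro i hi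
      rw [hz]; simp [d, hi]
    have h2 : ‖T₀ x - x‖ ≤ ‖x‖ := by
      refine le_of_sq_le_sq ?_ (norm_nonneg _)
      rw [← b.sum_sq_norm_inner_right, ← b.sum_sq_norm_inner_right x]
      refine Finset.sum_le_sum (fun i _ => ?_)
      rw [hz]
      by_cases hi : i.val < k
      · simp [d, hi]; positivity
      · simp [d, hi]; norm_num
    have h3 : ‖w x‖ ≤ 1 * ‖x‖ := w.le_of_opNorm_le hw1 x
    rw [hT]
    refine (norm_add_le _ _).trans ?_
    linarith
  have h1 := hw T (5 / 4) (by norm_num) hnorm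
  have h2 : T.det = ∏ i, d i := by
    change LinearMap.det T₀ = _
    rw [LinearMap.det_toLin, Matrix.det_diagonal]
  have h3 : (2 : ℝ) ^ m ≤ ∏ i, d i := by
    have h4 : ∏ i, d i = ∏ i ∈ Finset.range (2 * m), (if i < k then (1 : ℝ) else 2) := by
      rw [Finset.prod_range]
    rw [h4, two_mul, Finset.prod_range_add]
    have h5 : ∏ x ∈ Finset.range m, (if m + x < k then (1 : ℝ) else 2) = 2 ^ m := by
      rw [Finset.prod_congr rfl (g := fun _ => (2 : ℝ))]
      · simp
      · intro x _
        rw [if_neg (by omega)]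
    rw [h5]
    have h6 : (1 : ℝ) ≤ ∏ x ∈ Finset.range m, (if x < k then (1 : ℝ) else 2) := by
      calc (1 : ℝ) = ∏ x ∈ Finset.range m, 1 := by simp
        _ ≤ _ := Finset.prod_le_prod (fun _ _ => by norm_num)
          (fun i _ => by split_ifs <;> norm_num)
    have : (0 : ℝ) < 2 ^ m := by positivity
    nlinarith
  rw [h2] at h1
  have h4 : ((5 : ℝ) / 4) ^ (2 * m) < 2 ^ m := by
    rw [pow_mul]
    exact pow_lt_pow_left₀ (by norm_num) (by norm_num) (by omega)
  have := le_abs_self (∏ i, d i)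
  linarith

lemma exists_good_basis {Y : Type*} [NormedAddCommGroup Y] [NormedSpace ℝ Y] (m : ℕ)
    (w : EuclideanSpace ℝ (Fin (2 * m)) →L[ℝ] Y) (hw1 : ‖w‖ ≤ 1)
    (hw : ∀ (T : EuclideanSpace ℝ (Fin (2 * m)) →L[ℝ] EuclideanSpace ℝ (Fin (2 * m))) (r : ℝ),
      0 < r → ‖w ∘L T‖ ≤ r → |T.det| ≤ r ^ (2 * m))
    (k : ℕ) (hk : k ≤ m) :
    ∃ b : OrthonormalBasis (Fin (2 * m)) ℝ (EuclideanSpace ℝ (Fin (2 * m))),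
      ∀ i, i.val < k → 1 / 4 ≤ ‖w (b i)‖ := by
  induction k with
  | zero => exact ⟨EuclideanSpace.basisFun _ ℝ, by simp⟩
  | succ k ih =>
    obtain ⟨b, hb⟩ := ih (by omega)
    obtain ⟨x, hx1, hx0, hxw⟩ := extend_step m w hw1 hw k (by omega) b
    let kk : Fin (2 * m) := ⟨k, by omega⟩
    let v := Function.update b kk x
    have hvk : v kk = x := by simp [v]
    have hvi : ∀ i : Fin (2 * m), i ≠ kk → v i = b i := fun i hi => by simp [v, hi]
    have hlt : ∀ i : Fin (2 * m), i.val < k + 1 → i ≠ kk → i.val < k := by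
      intro i hi hne
      have : i.val ≠ k := fun h => hne (Fin.ext h)
      omega
    have hon : Orthonormal ℝ (Set.domRestrict {i : Fin (2 * m) | i.val < k + 1} v) := by
      constructor
      · rintro ⟨i, hi⟩
        change ‖v i‖ = 1
        by_cases h : i = kk
        · rw [h, hvk, hx1]
        · rw [hvi i h]; simp
      · rintro ⟨i, hi⟩ ⟨l, hl⟩ hne
        have hne' : i ≠ l := fun h => hne (Subtype.ext h)
        change inner ℝ (v i) (v l) = 0
        by_cases h : i = kk
        · have hl' : l ≠ kk := fun h' => hne' (h.trans h'.symm)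
          rw [h, hvk, hvi l hl', real_inner_comm]
          exact hx0 l (hlt l hl hl')
        · rw [hvi i h]
          by_cases h' : l = kk
          · rw [h', hvk]
            exact hx0 i (hlt i hi h)
          · rw [hvi l h']
            exact b.inner_eq_zero hne'
    obtain ⟨b', hb'⟩ := hon.exists_orthonormalBasis_extension_of_card_eq (by simp)
    refine ⟨b', fun i hi => ?_⟩
    rw [hb' i hi]
    by_cases h : i = kk
    · rw [h, hvk]; exact hxw
    · rw [hvi i h]
      exact hb i (hlt i hi h)

/-- A weak form of the Dvoretzky–Rogers lemma. -/
lemma dvoretzky_rogers {Y : Type*} [NormedAddCommGroup Y] [NormedSpace ℝ Y]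
    (hY : ¬ FiniteDimensional ℝ Y) (m : ℕ) :
    ∃ y : Fin m → Y, (∀ i, 1 / 4 ≤ ‖y i‖) ∧
      ∀ c : Fin m → ℝ, (∀ i, |c i| ≤ 1) → ‖∑ i, c i • y i‖ ≤ Real.sqrt m := by
  obtain ⟨w, hw1, hw⟩ := exists_max_map hY (2 * m)
  obtain ⟨b, hb⟩ := exists_good_basis m w hw1 hw m le_rfl
  let e : Fin m → Fin (2 * m) := Fin.castLE (by omega)
  have he : Function.Injective e := Fin.castLE_injective _
  refine ⟨fun i => w (b (e i)), fun i => hb _ i.2, fun c hc => ?_⟩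
  have h1 : ∑ i, c i • w (b (e i)) = w (∑ i, c i • b (e i)) := by simp
  rw [h1]
  refine (w.le_of_opNorm_le hw1 _).trans ?_
  rw [one_mul]
  apply Real.le_sqrt_of_sq_le
  have hon : Orthonormal ℝ (b ∘ e) := b.orthonormal.comp e he
  have h2 : ‖∑ i, c i • b (e i)‖ ^ 2 = ∑ i, c i ^ 2 := by
    rw [← real_inner_self_eq_norm_sq]
    have := hon.inner_sum c c Finset.univ
    simp only [Function.comp_apply] at this
    rw [this]
    simp [sq]
  rw [h2]
  calc ∑ i, c i ^ 2 ≤ ∑ _i : Fin m, (1 : ℝ) :=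
        Finset.sum_le_sum (fun i _ => by rw [← sq_abs]; exact pow_le_one₀ (abs_nonneg _) (hc i))
    _ = m := by simp

lemma exists_block_family {Y : Type*} [NormedAddCommGroup Y] [NormedSpace ℝ Y]
    (hY : ¬ FiniteDimensional ℝ Y) :
    ∃ g : (Σ p : ℕ, Fin (4 ^ p)) → Y,
      (∀ (s : Finset (Σ p : ℕ, Fin (4 ^ p))) (c : (Σ p : ℕ, Fin (4 ^ p)) → ℝ),
        (∀ i, |c i| ≤ 1) → ‖∑ i ∈ s, c i • g i‖ ≤ 2) ∧ ¬ Summable (fun i => ‖g i‖) := by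
  classical
  choose y hy1 hy2 using fun p : ℕ => dvoretzky_rogers hY (4 ^ p)
  refine ⟨fun x => ((4 : ℝ) ^ x.1)⁻¹ • y x.1 x.2, ?_, ?_⟩
  · intro s c hc
    let c' : (Σ p : ℕ, Fin (4 ^ p)) → ℝ := fun x => if x ∈ s then c x else 0
    have hc' : ∀ x, |c' x| ≤ 1 := by
      intro x
      by_cases h : x ∈ s
      · simp [c', h, hc x]
      · simp [c', h]
    let P := s.image Sigma.fst
    have hsub : s ⊆ P.sigma (fun _ => Finset.univ) := by
      intro x hx
      simp only [Finset.mem_sigma, Finset.mem_univ, and_true]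
      exact Finset.mem_image_of_mem _ hx
    have h1 : ∑ x ∈ s, c x • ((4 : ℝ) ^ x.1)⁻¹ • y x.1 x.2
        = ∑ x ∈ P.sigma (fun _ => Finset.univ), c' x • ((4 : ℝ) ^ x.1)⁻¹ • y x.1 x.2 := by
      rw [← Finset.sum_subset hsub]
      · refine Finset.sum_congr rfl (fun x hx => ?_)
        simp [c', hx]
      · intro x _ hx
        simp [c', hx]
    rw [h1, Finset.sum_sigma]
    refine (norm_sum_le _ _).trans ?_
    have h2 : ∀ p ∈ P, ‖∑ i, c' ⟨p, i⟩ • ((4 : ℝ) ^ p)⁻¹ • y p i‖ ≤ (1 / 2 : ℝ) ^ p := by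
      intro p _
      have h3 : ∑ i, c' ⟨p, i⟩ • ((4 : ℝ) ^ p)⁻¹ • y p i
          = ((4 : ℝ) ^ p)⁻¹ • ∑ i, c' ⟨p, i⟩ • y p i := by
        rw [Finset.smul_sum]
        exact Finset.sum_congr rfl (fun i _ => smul_comm _ _ _)
      rw [h3, norm_smul, Real.norm_of_nonneg (by positivity)]
      have h4 := hy2 p (fun i => c' ⟨p, i⟩) (fun i => hc' _)
      have h5 : Real.sqrt ((4 ^ p : ℕ) : ℝ) = 2 ^ p := by
        have : ((4 ^ p : ℕ) : ℝ) = (2 ^ p) ^ 2 := by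
          push_cast
          rw [← pow_mul, mul_comm, pow_mul]; norm_num
        rw [this, Real.sqrt_sq (by positivity)]
      rw [h5] at h4
      rw [inv_mul_le_iff₀ (by positivity), ← mul_pow]
      norm_num
      exact h4
    refine (Finset.sum_le_sum h2).trans ?_
    exact (summable_geometric_two.sum_le_tsum _ (fun _ _ => by positivity)).trans
      tsum_geometric_two.le
  · intro hs
    have h1 := ((summable_sigma_of_nonneg (fun _ => norm_nonneg _)).1 hs).2
    have h2 := h1.tendsto_atTop_zero
    have h3 : ∀ p : ℕ, (1 / 4 : ℝ) ≤ ∑' i : Fin (4 ^ p), ‖((4 : ℝ) ^ p)⁻¹ • y p i‖ := by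
      intro p
      rw [tsum_fintype]
      calc (1 / 4 : ℝ) = ∑ i : Fin (4 ^ p), ((4 : ℝ) ^ p)⁻¹ * (1 / 4) := by
            simp
        _ ≤ _ := Finset.sum_le_sum (fun i _ => by
            rw [norm_smul, Real.norm_of_nonneg (by positivity)]
            exact mul_le_mul_of_nonneg_left (hy1 p i) (by positivity))
    have h4 := ge_of_tendsto' h2 h3
    norm_num at h4

lemma exists_sequence {Y : Type*} [NormedAddCommGroup Y] [NormedSpace ℝ Y]
    (hY : ¬ FiniteDimensional ℝ Y) :
    ∃ y : ℕ → Y,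
      (∀ (S : Finset ℕ) (k : ℕ → ℕ) (c : ℕ → ℝ), Set.InjOn k S →
        (∀ i, |c i| ≤ 1) → ‖∑ j ∈ S, c j • y (k j)‖ ≤ 2) ∧ ¬ Summable (fun i => ‖y i‖) := by
  classical
  obtain ⟨g, hg1, hg2⟩ := exists_block_family hY
  have hinf : Infinite (Σ p : ℕ, Fin (4 ^ p)) := by
    refine Infinite.of_injective (fun p : ℕ => (⟨p, ⟨0, by positivity⟩⟩ : Σ p : ℕ, Fin (4 ^ p))) ?_
    intro p q h
    exact congrArg Sigma.fst h
  obtain ⟨e⟩ := nonempty_equiv_of_countable (α := ℕ) (β := Σ p : ℕ, Fin (4 ^ p))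
  refine ⟨g ∘ e, ?_, ?_⟩
  · intro S k c hk hc
    have hinj : Set.InjOn (fun j => e (k j)) S := fun i hi j hj h => hk hi hj (e.injective h)
    have h := hg1 (S.image (fun j => e (k j)))
      (fun x => c (Function.invFunOn (fun j => e (k j)) S x)) (fun _ => hc _)
    rw [Finset.sum_image hinj] at h
    convert h using 2
    refine Finset.sum_congr rfl (fun j hj => ?_)
    rw [hinj.leftInvOn_invFunOn hj]
    rfl
  · intro h
    exact hg2 (e.summable_iff.1 h)

lemma exists_bad_function {Y : Type*} [NormedAddCommGroup Y] [NormedSpace ℝ Y]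
    (hY : ¬ FiniteDimensional ℝ Y) (s : ℕ → ℝ) (hs : Function.Injective s) :
    ∃ f : ℝ → Y,
      (∀ (N : ℕ) (β : ℕ → ℝ) (c : ℕ → ℝ), Set.InjOn β (Finset.range N) →
        (∀ i, |c i| ≤ 1) → ‖∑ j ∈ Finset.range N, c j • f (β j)‖ ≤ 2) ∧
      (∀ k, f (s (2 * k + 1)) = 0) ∧ ¬ Summable (fun k => ‖f (s (2 * k))‖) := by
  classical
  obtain ⟨y, hy1, hy2⟩ := exists_sequence hY
  let σ : ℕ → ℝ := fun k => s (2 * k)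
  have hσ : Function.Injective σ := fun i j h => by
    have := hs h
    omega
  let f : ℝ → Y := Function.extend σ y 0
  have hf : ∀ k, f (s (2 * k)) = y k := fun k => hσ.extend_apply y 0 k
  refine ⟨f, ?_, ?_, ?_⟩
  · intro N β c hβ hc
    let S := (Finset.range N).filter (fun j => ∃ k, σ k = β j)
    let κ : ℕ → ℕ := fun j => Function.invFun σ (β j)
    have hκ : ∀ j ∈ S, σ (κ j) = β j := fun j hj =>
      Function.invFun_eq (Finset.mem_filter.1 hj).2
    have h1 : ∑ j ∈ Finset.range N, c j • f (β j) = ∑ j ∈ S, c j • y (κ j) := by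
      rw [← Finset.sum_subset (Finset.filter_subset (fun j => ∃ k, σ k = β j) (Finset.range N))]
      · refine Finset.sum_congr rfl (fun j hj => ?_)
        rw [← hκ j hj, hf]
      · intro j hj hjS
        have : ¬ ∃ k, σ k = β j := fun h => hjS (Finset.mem_filter.2 ⟨hj, h⟩)
        have h0 : f (β j) = 0 := Function.extend_apply' y (0 : ℝ → Y) (β j) this
        rw [h0, smul_zero]
    rw [h1]
    refine hy1 S κ c ?_ hc
    intro i hi j hj h
    refine hβ (Finset.mem_coe.2 (Finset.mem_filter.1 (Finset.mem_coe.1 hi)).1)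
      (Finset.mem_coe.2 (Finset.mem_filter.1 (Finset.mem_coe.1 hj)).1) ?_
    rw [← hκ i hi, ← hκ j hj, h]
  · intro k
    refine Function.extend_apply' y (0 : ℝ → Y) _ ?_
    rintro ⟨l, hl⟩
    have := hs hl
    omega
  · simpa only [hf] using hy2

lemma IsDivision.lt {a b : ℝ} {n : ℕ} {α : ℕ → ℝ} (h : IsDivision a b n α) :
    ∀ j i, i < j → j ≤ n → α i < α j := by
  intro j
  induction j with
  | zero => intro i hi; omega
  | succ j ih =>
    intro i hi hj
    have h1 := h.2.2 j (by omega)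
    rcases Nat.lt_succ_iff_lt_or_eq.1 hi with h2 | h2
    · exact (ih i h2 (by omega)).trans h1
    · rw [h2]; exact h1

lemma IsDivision.inj {a b : ℝ} {n : ℕ} {α : ℕ → ℝ} (h : IsDivision a b n α)
    {i j : ℕ} (hi : i ≤ n) (hj : j ≤ n) (hij : α i = α j) : i = j := by
  rcases lt_trichotomy i j with h1 | h1 | h1
  · exact absurd hij (h.lt j i h1 hj).ne
  · exact h1
  · exact absurd hij (h.lt i j h1 hi).ne'

lemma exists_counterexample {X Y : Type*} [NormedAddCommGroup X] [NormedSpace ℝ X] [Nontrivial X]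
    [NormedAddCommGroup Y] [NormedSpace ℝ Y]
    (hY : ¬ FiniteDimensional ℝ Y) (a b : ℝ) (hab : a < b) :
    ∃ F : ℝ → X →L[ℝ] Y, semivar a b F < ⊤ ∧ ¬ evar a b F < ⊤ := by
  let s : ℕ → ℝ := fun j => b - (b - a) / (j + 1)
  have hba : 0 < b - a := sub_pos.2 hab
  have hsm : StrictMono s := by
    refine strictMono_nat_of_lt_succ (fun j => ?_)
    apply sub_lt_sub_left
    apply div_lt_div_of_pos_left hba (by positivity)
    push_cast
    linarith
  have hsb : ∀ j, s j < b := by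
    intro j
    have : 0 < (b - a) / ((j : ℝ) + 1) := by positivity
    simp only [s]
    linarith
  obtain ⟨f, hf1, hf2, hf3⟩ := exists_bad_function hY s hsm.injective
  obtain ⟨x₀, hx₀⟩ := exists_ne (0 : X)
  obtain ⟨g, hg1, -⟩ := exists_dual_vector ℝ x₀ (norm_ne_zero_iff.2 hx₀)
  refine ⟨fun t => g.smulRight (f t), ?_, ?_⟩
  · refine lt_of_le_of_lt (b := ENNReal.ofReal 4) ?_ ENNReal.ofReal_lt_top
    refine iSup_le fun n => iSup_le fun α => iSup_le fun hα => iSup_le fun x => iSup_le fun hx => ?_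
    apply ENNReal.ofReal_le_ofReal
    have h1 : ∑ j ∈ Finset.range n, (g.smulRight (f (α (j + 1))) - g.smulRight (f (α j))) (x j)
        = ∑ j ∈ Finset.range n, g (x j) • f (α (j + 1))
          - ∑ j ∈ Finset.range n, g (x j) • f (α j) := by
      rw [← Finset.sum_sub_distrib]
      simp
    have hc : ∀ j, |g (x j)| ≤ 1 := by
      intro j
      have := g.le_of_opNorm_le hg1.le (x j)
      rw [Real.norm_eq_abs] at this
      linarith [hx j]
    have h2 := hf1 n (fun j => α (j + 1)) (fun j => g (x j)) (by
      intro i hi j hj h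
      simp only [Finset.coe_range, Set.mem_Iio] at hi hj
      have := hα.inj (by omega) (by omega) h
      omega) hc
    have h3 := hf1 n α (fun j => g (x j)) (by
      intro i hi j hj h
      simp only [Finset.coe_range, Set.mem_Iio] at hi hj
      exact hα.inj (by omega) (by omega) h) hc
    rw [h1]
    refine (norm_sub_le _ _).trans ?_
    linarith
  · intro hlt
    apply hf3
    refine summable_of_sum_range_le (c := (evar a b (fun t => g.smulRight (f t))).toReal)
      (fun _ => norm_nonneg _) (fun N => ?_)
    let α : ℕ → ℝ := fun j => if j ≤ 2 * N then s j else b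
    have hdiv : IsDivision a b (2 * N + 1) α := by
      refine ⟨by simp [α, s], by simp [α], fun i hi => ?_⟩
      have hi' : i ≤ 2 * N := by omega
      by_cases h : i + 1 ≤ 2 * N
      · simp only [α, hi', h, if_true]
        exact hsm (Nat.lt_succ_self i)
      · simp only [α, hi', h, if_true, if_false]
        exact hsb i
    have h1 : ENNReal.ofReal (∑ j ∈ Finset.range (2 * N + 1),
        ‖g.smulRight (f (α (j + 1))) - g.smulRight (f (α j))‖)
          ≤ evar a b (fun t => g.smulRight (f t)) :=
      le_iSup_of_le (2 * N + 1) (le_iSup_of_le α (le_iSup_of_le hdiv le_rfl))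
    rw [ENNReal.ofReal_le_iff_le_toReal hlt.ne] at h1
    refine le_trans ?_ h1
    rw [Finset.sum_range_succ]
    refine le_trans ?_ (le_add_of_nonneg_right (norm_nonneg _))
    have h2 : ∀ M, M ≤ N → ∑ i ∈ Finset.range M, ‖f (s (2 * i))‖ ≤
        ∑ j ∈ Finset.range (2 * M), ‖g.smulRight (f (α (j + 1))) - g.smulRight (f (α j))‖ := by
      intro M
      induction M with
      | zero => simp
      | succ M ih =>
        intro hM
        rw [Finset.sum_range_succ, Nat.mul_succ, Finset.sum_range_succ, Finset.sum_range_succ]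
        have h3 : ‖g.smulRight (f (α (2 * M + 1))) - g.smulRight (f (α (2 * M)))‖
            = ‖f (s (2 * M))‖ := by
          have e1 : α (2 * M + 1) = s (2 * M + 1) := if_pos (by omega)
          have e2 : α (2 * M) = s (2 * M) := if_pos (by omega)
          have e3 : g.smulRight (0 : Y) = 0 := by ext; simp
          rw [e1, e2, hf2, e3, zero_sub, norm_neg, ContinuousLinearMap.norm_smulRight_apply, hg1,
            one_mul]
        rw [h3]
        have := ih (by omega)
        have := norm_nonneg (g.smulRight (f (α (2 * M + 1 + 1))) - g.smulRight (f (α (2 * M + 1))))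
        linarith
    exact h2 N le_rfl

lemma exists_half_norm {X Y : Type*} [NormedAddCommGroup X] [NormedSpace ℝ X]
    [NormedAddCommGroup Y] [NormedSpace ℝ Y] (A : X →L[ℝ] Y) :
    ∃ x, ‖x‖ ≤ 1 ∧ ‖A‖ ≤ 2 * ‖A x‖ := by
  by_cases h : A = 0
  · exact ⟨0, by simp, by simp [h]⟩
  · have hA : 0 < ‖A‖ := norm_pos_iff.2 h
    obtain ⟨x, hx, hAx⟩ := A.exists_lt_apply_of_lt_opNorm (half_lt_self hA)
    exact ⟨x, hx.le, by linarith⟩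

lemma evar_lt_top_of_finiteDimensional
    {X Y : Type*} [NormedAddCommGroup X] [NormedSpace ℝ X]
    [NormedAddCommGroup Y] [NormedSpace ℝ Y] [FiniteDimensional ℝ Y]
    (a b : ℝ) (F : ℝ → X →L[ℝ] Y) (hF : semivar a b F < ⊤) : evar a b F < ⊤ := by
  let B := Module.finBasis ℝ Y
  let φ : Fin (Module.finrank ℝ Y) → Y →L[ℝ] ℝ := fun i =>
    LinearMap.toContinuousLinearMap (B.coord i)
  have hφ : ∀ y, ‖y‖ ≤ ∑ i, |φ i y| * ‖B i‖ := by
    intro y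
    conv_lhs => rw [← B.sum_repr y]
    refine (norm_sum_le _ _).trans (le_of_eq ?_)
    refine Finset.sum_congr rfl (fun i _ => ?_)
    rw [norm_smul]
    rfl
  let M := (semivar a b F).toReal
  refine lt_of_le_of_lt (b := ENNReal.ofReal (2 * ∑ i, (‖φ i‖ * M) * ‖B i‖)) ?_
    ENNReal.ofReal_lt_top
  refine iSup_le fun n => iSup_le fun α => iSup_le fun hα => ?_
  apply ENNReal.ofReal_le_ofReal
  choose x hx hAx using fun j => exists_half_norm (F (α (j + 1)) - F (α j))
  have key : ∀ i, ∑ j ∈ Finset.range n, |φ i ((F (α (j + 1)) - F (α j)) (x j))| ≤ ‖φ i‖ * M := by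
    intro i
    let ε : ℕ → ℝ := fun j => if 0 ≤ φ i ((F (α (j + 1)) - F (α j)) (x j)) then 1 else -1
    have hε : ∀ j, ‖ε j • x j‖ ≤ 1 := by
      intro j
      rw [norm_smul]
      have : ‖ε j‖ = 1 := by
        simp only [ε]; split_ifs <;> simp
      rw [this, one_mul]
      exact hx j
    have h1 : ENNReal.ofReal ‖∑ j ∈ Finset.range n, (F (α (j + 1)) - F (α j)) (ε j • x j)‖
        ≤ semivar a b F :=
      le_iSup_of_le n (le_iSup_of_le α (le_iSup_of_le hα
        (le_iSup_of_le (fun j => ε j • x j) (le_iSup_of_le hε le_rfl))))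
    rw [ENNReal.ofReal_le_iff_le_toReal hF.ne] at h1
    have h2 : ∑ j ∈ Finset.range n, |φ i ((F (α (j + 1)) - F (α j)) (x j))|
        = φ i (∑ j ∈ Finset.range n, (F (α (j + 1)) - F (α j)) (ε j • x j)) := by
      rw [map_sum]
      refine Finset.sum_congr rfl (fun j _ => ?_)
      rw [map_smul, map_smul, smul_eq_mul]
      by_cases h : 0 ≤ φ i ((F (α (j + 1)) - F (α j)) (x j))
      · have e1 : ε j = 1 := if_pos h
        rw [abs_of_nonneg h, e1, one_mul]
      · have e1 : ε j = -1 := if_neg h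
        rw [abs_of_neg (not_le.1 h), e1, neg_one_mul]
    rw [h2]
    refine (le_abs_self _).trans (((φ i).le_opNorm _).trans ?_)
    exact mul_le_mul_of_nonneg_left h1 (norm_nonneg _)
  calc ∑ j ∈ Finset.range n, ‖F (α (j + 1)) - F (α j)‖
      ≤ ∑ j ∈ Finset.range n, 2 * ∑ i, |φ i ((F (α (j + 1)) - F (α j)) (x j))| * ‖B i‖ :=
        Finset.sum_le_sum (fun j _ => (hAx j).trans
          (mul_le_mul_of_nonneg_left (hφ _) (by norm_num)))
    _ = 2 * ∑ i, (∑ j ∈ Finset.range n, |φ i ((F (α (j + 1)) - F (α j)) (x j))|) * ‖B i‖ := by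
        rw [← Finset.mul_sum, Finset.sum_comm]
        simp only [Finset.sum_mul]
    _ ≤ _ := by
        refine mul_le_mul_of_nonneg_left (Finset.sum_le_sum fun i _ => ?_) (by norm_num)
        exact mul_le_mul_of_nonneg_right (key i) (norm_nonneg _)

/-- `Y` is finite-dimensional iff every `F : [a,b] → L(X,Y)` of bounded
semivariation is of bounded variation. -/
theorem finiteDimensional_iff_semivar_imp_bv
    {X Y : Type*} [NormedAddCommGroup X] [NormedSpace ℝ X] [CompleteSpace X] [Nontrivial X]
    [NormedAddCommGroup Y] [NormedSpace ℝ Y] [CompleteSpace Y]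
    (a b : ℝ) (hab : a < b) :
    FiniteDimensional ℝ Y ↔
      ∀ F : ℝ → X →L[ℝ] Y, semivar a b F < ⊤ → evar a b F < ⊤ := by
  constructor
  · intro hY F hF
    exact evar_lt_top_of_finiteDimensional a b F hF
  · intro h
    by_contra hY
    obtain ⟨F, hF1, hF2⟩ := exists_counterexample (X := X) hY a b hab
    exact hF2 (h F hF1)
end
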